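/- arXiv:1511.05651 — 12 statements merged into one kernel-verified Lean document; each statement's English description precedes it below -/
import Mathlib

section
/- Let A be a unital C*-algebra and u : Fin n → Fin n → A an orthogonal matrix (all entries selfadjoint, with ∑_k (u i k)*(u j k) = δ_{ij}·1 and ∑_k (u k i)*(u k j) = δ_{ij}·1 for all i, j). If ∑_{k} (u k j)^4 = 1 for every j, then the cubic relations hold: for all i and all j ≠ k one has (u i j)*(u i k) = 0 and (u j i)*(u k i) = 0. -/
open scoped BigOperators

/-!
For a fixed column, `∑ k, (u k j)^2 = 1` and `∑ k, (u k j)^4 = 1`. Since `(u k j)^2 ≤ 1`, each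
difference `(u k j)^2 - (u k j)^4 = u k j * (1 - (u k j)^2) * u k j` is positive; these differences
sum to zero, so each vanishes and every `(u k j)^2` is a projection (`pow_four_eq_sq`). Projections
summing to one are pairwise orthogonal, and the C*-identity passes the orthogonality from the
squares to the entries themselves (`mul_eq_zero_of_sum_sq`). This last step applies to rows as
well as to columns.
-/

section

variable {A ι : Type*} [CStarAlgebra A] [PartialOrder A] [StarOrderedRing A]
  [Fintype ι] {x : ι → A}

lemma pow_four_eq_sq (hx : ∀ i, IsSelfAdjoint (x i)) (h2 : ∑ i, x i * x i = 1)
    (h4 : ∑ i, x i ^ 4 = 1) (i : ι) : x i ^ 4 = x i * x i := by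
  have hsq : ∀ i, 0 ≤ x i * x i := fun i => (hx i).mul_self_nonneg
  have hle : ∀ i, x i * x i ≤ 1 := fun i =>
    h2 ▸ Finset.single_le_sum (fun j _ => hsq j) (Finset.mem_univ i)
  have hpos : ∀ i ∈ Finset.univ, 0 ≤ x i * x i - x i ^ 4 := fun i _ => by
    have h := (hx i).conjugate_nonneg (sub_nonneg.2 (hle i))
    have e : x i * (1 - x i * x i) * x i = x i * x i - x i ^ 4 := by noncomm_ring
    rwa [e] at h
  have hsum : ∑ i, (x i * x i - x i ^ 4) = 0 := by
    rw [Finset.sum_sub_distrib, h2, h4, sub_self]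
  exact (sub_eq_zero.1 ((Finset.sum_eq_zero_iff_of_nonneg hpos).1 hsum i (Finset.mem_univ i))).symm

/-- With `p = (x i)^2`, compressing `∑ j, (x j)^2 = 1` by `p` leaves
`∑ j ≠ i, p * (x j)^2 * p = 0`, a sum of the positive elements `star (x j * p) * (x j * p)`. -/
lemma mul_eq_zero_of_sum_sq (hx : ∀ i, IsSelfAdjoint (x i)) (h2 : ∑ i, x i * x i = 1)
    (hp : ∀ i, x i ^ 4 = x i * x i) {i k : ι} (hik : k ≠ i) : x k * x i = 0 := by
  classical
  have hpp : (x i * x i) * (x i * x i) = x i * x i := by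
    conv_rhs => rw [← hp i]
    noncomm_ring
  have hstar : ∀ j, star (x j * (x i * x i)) * (x j * (x i * x i))
      = (x i * x i) * (x j * x j) * (x i * x i) := fun j => by
    simp only [star_mul, (hx _).star_eq, mul_assoc]
  have htot : ∑ j, star (x j * (x i * x i)) * (x j * (x i * x i)) = x i * x i := by
    simp only [hstar]
    rw [← Finset.sum_mul, ← Finset.mul_sum, h2, mul_one, hpp]
  have hi : star (x i * (x i * x i)) * (x i * (x i * x i)) = x i * x i := by
    rw [hstar, hpp, hpp]
  rw [← Finset.add_sum_erase _ _ (Finset.mem_univ i), hi, add_eq_left] at htot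
  have hk := (Finset.sum_eq_zero_iff_of_nonneg (fun j _ => star_mul_self_nonneg _)).1 htot k
    (Finset.mem_erase.2 ⟨hik, Finset.mem_univ k⟩)
  rw [CStarRing.star_mul_self_eq_zero_iff] at hk
  rw [← CStarRing.mul_star_self_eq_zero_iff, star_mul, (hx _).star_eq, (hx _).star_eq]
  calc _ = x k * (x i * x i) * x k := by noncomm_ring
    _ = 0 := by rw [hk, zero_mul]

end

/-- For an orthogonal matrix over a unital C*-algebra, the condition
`∑ k, (u k j)^4 = 1` for every column `j` implies the cubic relations. -/
theorem orthogonal_fourth_power_sum_one_implies_cubic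
    {A : Type*} [NormedRing A] [StarRing A] [CStarRing A]
    [CompleteSpace A] [NormedAlgebra ℂ A] [StarModule ℂ A]
    (n : ℕ) (hn : 0 < n) (u : Fin n → Fin n → A)
    (hsa : ∀ i j, IsSelfAdjoint (u i j))
    (hrow : ∀ i j, ∑ k, u i k * u j k = if i = j then 1 else 0)
    (hcol : ∀ i j, ∑ k, u k i * u k j = if i = j then 1 else 0)
    (h4 : ∀ j, ∑ k, (u k j) ^ 4 = 1) :
    ∀ i j k, j ≠ k → u i j * u i k = 0 ∧ u j i * u k i = 0 := by
  let : CStarAlgebra A := {}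
  let : PartialOrder A := CStarAlgebra.spectralOrder A
  have : StarOrderedRing A := CStarAlgebra.spectralOrderedRing A
  have hp : ∀ i j, u i j ^ 4 = u i j * u i j := fun i j =>
    pow_four_eq_sq (x := fun k => u k j) (fun k => hsa k j) (by simpa using hcol j j) (h4 j) i
  intro i j k hjk
  exact ⟨mul_eq_zero_of_sum_sq (x := fun l => u i l) (fun l => hsa i l)
      (by simpa using hrow i i) (fun l => hp i l) hjk,
    mul_eq_zero_of_sum_sq (x := fun l => u l i) (fun l => hsa l i)
      (by simpa using hcol i i) (fun l => hp l i) hjk⟩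
end

section
/- Let R be a unital ring, n a positive natural number, and u : Fin n → Fin n → R a family satisfying the row orthogonality relations ∑_k (u i k) * (u j k) = (if i = j then 1 else 0) for all i, j. If every column sums to 1, i.e. ∑_k u k j = 1 for all j, then every row sums to 1: ∑_k u i k = 1 for all i. -/
open scoped BigOperators

/-- In a unital ring, if the row orthogonality relations hold and
every column of `u` sums to 1, then every row of `u` sums to 1. -/
theorem row_sums_one_of_col_sums_one
    {R : Type*} [Ring R]
    (n : ℕ) (hn : 0 < n) (u : Fin n → Fin n → R)
    (hrow : ∀ i j, ∑ k, u i k * u j k = if i = j then 1 else 0)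
    (hcolsum : ∀ j, ∑ k, u k j = 1) :
    ∀ i, ∑ k, u i k = 1 := by
  intro i
  -- Summing the orthogonality relations for row `i` over all `j` turns the second factor
  -- into a column sum.
  calc ∑ k, u i k = ∑ k, u i k * ∑ j, u j k := by simp [hcolsum]
    _ = ∑ j, ∑ k, u i k * u j k := by
      simp only [Finset.mul_sum]
      exact Finset.sum_comm
    _ = 1 := by simp [hrow]
end

section
/- Let R be a unital ring, n a positive natural number, and u : Fin n → Fin n → R a family such that every row sums to 1 (∑_k u i k = 1 for all i) and the row cubic relations hold ((u i j) * (u i k) = 0 whenever j ≠ k). Then every entry is idempotent: (u i j) * (u i j) = u i j for all i, j. -/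
open scoped BigOperators

/-- In a unital ring, if every row of `u` sums to 1 and the row cubic
relations hold, then every entry of `u` is idempotent. -/
theorem entries_idempotent_of_row_sum_one_and_cubic
    {R : Type*} [Ring R]
    (n : ℕ) (hn : 0 < n) (u : Fin n → Fin n → R)
    (hrowsum : ∀ i, ∑ k, u i k = 1)
    (hcubic : ∀ i j k, j ≠ k → u i j * u i k = 0) :
    ∀ i j, u i j * u i j = u i j := by
  intro i j
  -- Expand `u i j = u i j * ∑ k, u i k`; only the term `k = j` survives.
  calc u i j * u i j = ∑ k, u i j * u i k :=
        (Finset.sum_eq_single_of_mem j (Finset.mem_univ j)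
          fun k _ hk => hcubic i j k hk.symm).symm
    _ = u i j := by rw [← Finset.mul_sum, hrowsum, mul_one]
end

section
/- Let A be a unital C*-algebra, equipped with its canonical partial order (x ≤ y iff y - x is positive), and let a ∈ A be selfadjoint with ‖a‖ ≤ 1. Then (i) a^m ≤ a^2 for every natural number m ≥ 2; and (ii) if a^4 ≠ a^2, then a^m ≠ a^2 for every natural number m ≥ 3. -/
/-!
Everything reduces to real numbers through the continuous functional calculus: powers of `a`
are `cfc (· ^ n) a`, and the real spectrum of `a` lies in `[-1, 1]` because `‖a‖ ≤ 1`.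
On `[-1, 1]` one has `t ^ m ≤ t ^ 2` for `m ≥ 2`, which gives (i). For (ii), if `a ^ m = a ^ 2`
with `m ≥ 3`, then `t ^ m = t ^ 2` on the spectrum, so the spectrum is contained in `{-1, 0, 1}`,
where `t ^ 4 = t ^ 2`; hence `a ^ 4 = a ^ 2`.
-/

lemma real_pow_le_sq {x : ℝ} (hx : |x| ≤ 1) {m : ℕ} (hm : 2 ≤ m) : x ^ m ≤ x ^ 2 :=
  calc x ^ m ≤ |x ^ m| := le_abs_self _
    _ = |x| ^ m := abs_pow x m
    _ ≤ |x| ^ 2 := pow_le_pow_of_le_one (abs_nonneg x) hx hm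
    _ = x ^ 2 := sq_abs x

lemma real_pow_four_eq_sq {x : ℝ} {m : ℕ} (hm : 3 ≤ m) (h : x ^ m = x ^ 2) :
    x ^ 4 = x ^ 2 := by
  by_cases hx0 : x = 0
  · simp [hx0]
  obtain ⟨k, rfl⟩ := Nat.exists_eq_add_of_le hm
  have h1 : x ^ (k + 1) = 1 := by
    apply mul_left_cancel₀ (pow_ne_zero 2 hx0)
    rw [← pow_add, mul_one, ← h]
    congr 1
    omega
  have h2 : |x| = 1 := by
    rw [← pow_eq_one_iff_of_nonneg (abs_nonneg x) k.succ_ne_zero, ← abs_pow, h1, abs_one]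
  have h3 : x ^ 2 = 1 := by rw [← sq_abs, h2, one_pow]
  rw [show x ^ 4 = (x ^ 2) ^ 2 by ring, h3, one_pow]

/-- For a selfadjoint element `a` of norm at most 1 in a unital C*-algebra
(with its canonical order): (i) `a ^ m ≤ a ^ 2` for all `m ≥ 2`; (ii) if `a ^ 4 ≠ a ^ 2`
then `a ^ m ≠ a ^ 2` for all `m ≥ 3`. -/
theorem pow_le_sq_and_pow_ne_sq
    {A : Type*} [NormedRing A] [StarRing A] [CStarRing A]
    [CompleteSpace A] [NormedAlgebra ℂ A] [StarModule ℂ A]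
    [PartialOrder A] [StarOrderedRing A]
    (a : A) (ha : IsSelfAdjoint a) (hnorm : ‖a‖ ≤ 1) :
    (∀ m : ℕ, 2 ≤ m → a ^ m ≤ a ^ 2) ∧
      (a ^ 4 ≠ a ^ 2 → ∀ m : ℕ, 3 ≤ m → a ^ m ≠ a ^ 2) := by
  -- The functional calculus instances are stated for the bundled class.
  letI : CStarAlgebra A := {}
  -- The norm bound on the spectrum uses `‖1‖ = 1`, which fails in the zero algebra.
  rcases subsingleton_or_nontrivial A with hA | hA
  · exact ⟨fun m _ => (Subsingleton.elim _ _).le, fun h => (h (Subsingleton.elim _ _)).elim⟩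
  have hspec : ∀ x ∈ spectrum ℝ a, |x| ≤ 1 := fun x hx =>
    (spectrum.norm_le_norm_of_mem hx).trans hnorm
  have hpow : ∀ n : ℕ, cfc (fun x : ℝ => x ^ n) a = a ^ n := fun n => cfc_pow_id a n ha
  refine ⟨fun m hm => ?_, fun h4 m hm h => h4 ?_⟩
  · rw [← hpow m, ← hpow 2]
    exact cfc_mono fun x hx => real_pow_le_sq (hspec x hx) hm
  · rw [← hpow m, ← hpow 2] at h
    rw [← hpow 4, ← hpow 2]
    have heq := eqOn_of_cfc_eq_cfc h
    exact cfc_congr fun x hx => real_pow_four_eq_sq hm (heq hx)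
end

section
/- Let A be a unital C*-algebra and u : Fin n → Fin n → A an orthogonal matrix (all entries selfadjoint, with ∑_k (u i k)*(u j k) = δ_{ij}·1 and ∑_k (u k i)*(u k j) = δ_{ij}·1 for all i, j). If for some index i one has ∑_{k} (u k i)^4 ≠ 1, then for every natural number m ≥ 3 one has ∑_{k} (u k i)^m ≠ 1. -/
open scoped BigOperators

/-!
Suppose `∑ k, x k ^ m = 1` for the entries `x k` of the column. Since `∑ k, x k ^ 2 = 1`, each
`x k ^ 2 ≤ 1`, so the spectrum of `x k` lies in `[-1, 1]` and `x k ^ m ≤ x k ^ 2` for `m ≥ 2`.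
The positive elements `x k ^ 2 - x k ^ m` sum to `0`, hence all vanish. For `m ≥ 3` a real number
`t ∈ [-1, 1]` with `t ^ 2 = t ^ m` is `-1`, `0` or `1`, so `x k ^ 4 = x k ^ 2` by functional
calculus, and `∑ k, x k ^ 4 = 1`.
-/

lemma pow_le_sq_of_sq_le_one {t : ℝ} (ht : t ^ 2 ≤ 1) {m : ℕ} (hm : 2 ≤ m) : t ^ m ≤ t ^ 2 := by
  calc t ^ m ≤ |t ^ m| := le_abs_self _
    _ = |t| ^ m := abs_pow t m
    _ ≤ |t| ^ 2 := pow_le_pow_of_le_one (abs_nonneg t) ((sq_le_one_iff_abs_le_one t).mp ht) hm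
    _ = t ^ 2 := sq_abs t

lemma fourth_pow_eq_sq_of_sq_eq_pow {t : ℝ} {m : ℕ} (hm : 3 ≤ m)
    (h : t ^ 2 = t ^ m) : t ^ 4 = t ^ 2 := by
  by_cases h0 : t = 0
  · simp [h0]
  obtain ⟨d, rfl⟩ : ∃ d, m = 2 + (d + 1) := ⟨m - 3, by lia⟩
  have h1 : t ^ (d + 1) = 1 := by
    rw [pow_add] at h
    exact mul_left_cancel₀ (pow_ne_zero 2 h0) (by rw [← h, mul_one])
  have h2 : |t| ^ (d + 1) = 1 := by rw [← abs_pow, h1, abs_one]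
  have h3 : |t| = 1 := (pow_eq_one_iff_of_nonneg (abs_nonneg t) d.succ_ne_zero).mp h2
  have h4 : t ^ 2 = 1 := by rw [← sq_abs, h3, one_pow]
  calc t ^ 4 = (t ^ 2) ^ 2 := by ring
    _ = t ^ 2 := by rw [h4, one_pow]

lemma sum_fourth_pow_eq_one {A ι : Type*} [Fintype ι] [CStarAlgebra A] [PartialOrder A]
    [StarOrderedRing A] (x : ι → A) (hx : ∀ k, IsSelfAdjoint (x k))
    (h2 : ∑ k, x k ^ 2 = 1) {m : ℕ} (hm : 3 ≤ m) (hsum : ∑ k, x k ^ m = 1) :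
    ∑ k, x k ^ 4 = 1 := by
  have hsq : ∀ k, ∀ t ∈ spectrum ℝ (x k), t ^ 2 ≤ 1 := by
    intro k
    have hle : x k ^ 2 ≤ 1 := by
      rw [← h2]
      exact Finset.single_le_sum (f := fun k => x k ^ 2) (fun j _ => (hx j).sq_nonneg)
        (Finset.mem_univ k)
    rw [← cfc_pow_id (R := ℝ) (x k) 2 (hx k)] at hle
    exact (cfc_le_one_iff (R := ℝ) (fun t => t ^ 2) (x k) (by fun_prop) (hx k)).mp hle
  have hpow_le : ∀ k, x k ^ m ≤ x k ^ 2 := by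
    intro k
    rw [← cfc_pow_id (R := ℝ) (x k) 2 (hx k), ← cfc_pow_id (R := ℝ) (x k) m (hx k)]
    exact cfc_mono fun t ht => pow_le_sq_of_sq_le_one (hsq k t ht) (by lia)
  have hzero : ∑ k, (x k ^ 2 - x k ^ m) = 0 := by
    rw [Finset.sum_sub_distrib, h2, hsum, sub_self]
  rw [Finset.sum_eq_zero_iff_of_nonneg fun k _ => sub_nonneg.mpr (hpow_le k)] at hzero
  rw [← h2]
  refine Finset.sum_congr rfl fun k hk => ?_
  have heq : x k ^ 2 = x k ^ m := sub_eq_zero.mp (hzero k hk)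
  rw [← cfc_pow_id (R := ℝ) (x k) 2 (hx k), ← cfc_pow_id (R := ℝ) (x k) m (hx k)] at heq
  have hEq := (cfc_eq_cfc_iff_eqOn (R := ℝ) (hx k)).mp heq
  rw [← cfc_pow_id (R := ℝ) (x k) 2 (hx k), ← cfc_pow_id (R := ℝ) (x k) 4 (hx k)]
  exact cfc_congr fun t ht => fourth_pow_eq_sq_of_sq_eq_pow hm (hEq ht)

/-- For an orthogonal matrix over a unital C*-algebra, if some column `i`
satisfies `∑ k, (u k i)^4 ≠ 1`, then `∑ k, (u k i)^m ≠ 1` for every `m ≥ 3`. -/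
theorem col_pow_sum_ne_one_of_fourth_pow_sum_ne_one
    {A : Type*} [NormedRing A] [StarRing A] [CStarRing A]
    [CompleteSpace A] [NormedAlgebra ℂ A] [StarModule ℂ A]
    (n : ℕ) (hn : 0 < n) (u : Fin n → Fin n → A)
    (hsa : ∀ i j, IsSelfAdjoint (u i j))
    (hrow : ∀ i j, ∑ k, u i k * u j k = if i = j then 1 else 0)
    (hcol : ∀ i j, ∑ k, u k i * u k j = if i = j then 1 else 0)
    (i : Fin n) (h4 : ∑ k, (u k i) ^ 4 ≠ 1) :
    ∀ m : ℕ, 3 ≤ m → ∑ k, (u k i) ^ m ≠ 1 := by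
  intro m hm hsum
  letI : CStarAlgebra A := {}
  letI : PartialOrder A := CStarAlgebra.spectralOrder A
  haveI : StarOrderedRing A := CStarAlgebra.spectralOrderedRing A
  exact h4 (sum_fourth_pow_eq_one (fun k => u k i) (fun k => hsa k i)
    (by simpa [sq] using hcol i i) hm hsum)
end

section
/- Let A be a unital C*-algebra and u : Fin n → Fin n → A an orthogonal matrix (all entries selfadjoint, with ∑_k (u i k)*(u j k) = δ_{ij}·1 and ∑_k (u k i)*(u k j) = δ_{ij}·1) that moreover satisfies the cubic relations (u i j)*(u i k) = 0 and (u j i)*(u k i) = 0 for all j ≠ k. If for some index i one has ∑_{k} u k i ≠ 1, then for every odd natural number m one has ∑_{k} (u k i)^m ≠ 1. -/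
/-!
Every entry of a cubic orthogonal matrix satisfies `x ^ 3 = x`: multiply the column relation
`∑ k, u k i ^ 2 = 1` by `u l i` and use the vanishing of products within a column. Hence
`x ^ m = x` for all odd `m`, so `∑ k, u k i ^ m` is just `∑ k, u k i`.
-/

open scoped BigOperators

/-- For a cubic orthogonal matrix over a unital C*-algebra, if some column `i`
satisfies `∑ k, u k i ≠ 1`, then `∑ k, (u k i)^m ≠ 1` for every odd `m`. -/
theorem col_odd_pow_sum_ne_one_of_sum_ne_one
    {A : Type*} [NormedRing A] [StarRing A] [CStarRing A]
    [CompleteSpace A] [NormedAlgebra ℂ A] [StarModule ℂ A]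
    (n : ℕ) (hn : 0 < n) (u : Fin n → Fin n → A)
    (hsa : ∀ i j, IsSelfAdjoint (u i j))
    (hrow : ∀ i j, ∑ k, u i k * u j k = if i = j then 1 else 0)
    (hcol : ∀ i j, ∑ k, u k i * u k j = if i = j then 1 else 0)
    (hcubic : ∀ i j k, j ≠ k → u i j * u i k = 0 ∧ u j i * u k i = 0)
    (i : Fin n) (h1 : ∑ k, u k i ≠ 1) :
    ∀ m : ℕ, Odd m → ∑ k, (u k i) ^ m ≠ 1 := by
  -- Multiplying `∑ k, u k i ^ 2 = 1` by `u l i` kills every term but `k = l`.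
  have hcube : ∀ l, u l i * u l i * u l i = u l i := by
    intro l
    have h := congrArg (· * u l i) (hcol i i)
    simp only [if_true, one_mul, Finset.sum_mul] at h
    rw [Finset.sum_eq_single l] at h
    · exact h
    · intro k _ hk
      rw [mul_assoc, (hcubic i k l hk).2, mul_zero]
    · simp
  have hpow : ∀ (t : ℕ) (l : Fin n), u l i ^ (2 * t + 1) = u l i := by
    intro t l
    induction t with
    | zero => simp
    | succ t ih =>
      rw [show 2 * (t + 1) + 1 = (2 * t + 1) + 1 + 1 by ring, pow_succ, pow_succ, ih, hcube]
  rintro m ⟨t, rfl⟩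
  simpa only [hpow] using h1
end

section
/- Let A be a C*-algebra and u, v ∈ A selfadjoint elements with u^2 * v^2 = 0. Then u * v = 0. -/
/-- In a C*-algebra, if `u` and `v` are selfadjoint and `u² * v² = 0`,
then `u * v = 0`. -/
theorem mul_eq_zero_of_sq_mul_sq_eq_zero
    {A : Type*} [NonUnitalNormedRing A] [StarRing A] [CStarRing A] [CompleteSpace A]
    (u v : A) (hu : IsSelfAdjoint u) (hv : IsSelfAdjoint v)
    (h : u * u * (v * v) = 0) :
    u * v = 0 := by
  -- The C*-identity is used twice: `(u v²)⋆ (u v²) = v² (u² v²)` and `(u v) (u v)⋆ = (u v²) u`.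
  have h1 : u * (v * v) = 0 := by
    rw [← CStarRing.star_mul_self_eq_zero_iff]
    calc star (u * (v * v)) * (u * (v * v)) = v * v * (u * u * (v * v)) := by
          simp only [star_mul, hu.star_eq, hv.star_eq, mul_assoc]
      _ = 0 := by rw [h, mul_zero]
  rw [← CStarRing.mul_star_self_eq_zero_iff]
  calc u * v * star (u * v) = u * (v * v) * u := by
        simp only [star_mul, hu.star_eq, hv.star_eq, mul_assoc]
    _ = 0 := by rw [h1, zero_mul]
end

section
/- Let R be a unital ring, n, k₁, k₂ positive natural numbers, u : Fin n → Fin n → R, and P ∈ R. For an equivalence relation π on Fin k and a tuple j : Fin k → Fin n, write S(π, j) := ∑ over all tuples i : Fin k → Fin n that are constant on every π-class, of the ordered product u (i 0) (j 0) * u (i 1) (j 1) * ⋯ * u (i (k−1)) (j (k−1)) * P. Let π₁, π₂ be equivalence relations on Fin k₁ and Fin k₂ with concatenation π on Fin (k₁+k₂), and let j₁ : Fin k₁ → Fin n, j₂ : Fin k₂ → Fin n with concatenation j = Fin.append j₁ j₂. Assume that for l = 1, 2: S(π_l, j_l) = P if j_l is constant on every π_l-class, and S(π_l, j_l) = 0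 otherwise. Then S(π, j) = P if j is constant on every π-class, and S(π, j) = 0 otherwise. -/
/-!
Splitting a tuple on `Fin (k₁ + k₂)` into its two segments turns `S` of a concatenation into
an iterated sum, `S u P π j = S u (S u P π₂ j₂) π₁ j₁` (`S_append`). The inner sum is `P` or `0`
by the hypothesis on the second segment; in the first case the hypothesis on the first segment
finishes, and in the second every term vanishes.
-/

open scoped BigOperators

/-- The concatenation of a relation on `Fin k₁` and a relation on `Fin k₂`, viewed as a
relation on `Fin (k₁ + k₂)`. -/
def concatRel {k₁ k₂ : ℕ} (r₁ : Fin k₁ → Fin k₁ → Prop) (r₂ : Fin k₂ → Fin k₂ → Prop)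
    (a b : Fin (k₁ + k₂)) : Prop :=
  (∃ a' b', a = Fin.castAdd k₂ a' ∧ b = Fin.castAdd k₂ b' ∧ r₁ a' b') ∨
  (∃ a' b', a = Fin.natAdd k₁ a' ∧ b = Fin.natAdd k₁ b' ∧ r₂ a' b')

open Classical in
/-- `S u P π j` is the sum, over all tuples `i : Fin k → Fin n` that are constant on every
`π`-class, of the ordered products `u (i 0) (j 0) * ⋯ * u (i (k-1)) (j (k-1)) * P`. -/
noncomputable def S {R : Type*} [Ring R] {n k : ℕ} (u : Fin n → Fin n → R) (P : R)
    (π : Fin k → Fin k → Prop) (j : Fin k → Fin n) : R :=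
  ∑ i : Fin k → Fin n,
    if ∀ a b, π a b → i a = i b then (List.ofFn fun l => u (i l) (j l)).prod * P else 0

/-- A concatenated tuple respects `concatRel` iff each half respects its own relation. -/
lemma concatRel_append_iff {α : Type*} {k₁ k₂ : ℕ} (π₁ : Fin k₁ → Fin k₁ → Prop)
    (π₂ : Fin k₂ → Fin k₂ → Prop) (f : Fin k₁ → α) (g : Fin k₂ → α) :
    (∀ a b, concatRel π₁ π₂ a b → Fin.append f g a = Fin.append f g b) ↔
      (∀ a b, π₁ a b → f a = f b) ∧ (∀ a b, π₂ a b → g a = g b) := by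
  constructor
  · intro h
    refine ⟨fun a b hab => ?_, fun a b hab => ?_⟩
    · simpa using h _ _ (Or.inl ⟨a, b, rfl, rfl, hab⟩)
    · simpa using h _ _ (Or.inr ⟨a, b, rfl, rfl, hab⟩)
  · rintro ⟨hf, hg⟩ _ _ (⟨a, b, rfl, rfl, hab⟩ | ⟨a, b, rfl, rfl, hab⟩)
    · simpa using hf a b hab
    · simpa using hg a b hab

/-- The sum over a concatenation is an iterated sum: the inner sum over the second segment
plays the role of `P` in the sum over the first. -/
lemma S_append {R : Type*} [Ring R] {n k₁ k₂ : ℕ} (u : Fin n → Fin n → R) (P : R)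
    (π₁ : Fin k₁ → Fin k₁ → Prop) (π₂ : Fin k₂ → Fin k₂ → Prop)
    (j₁ : Fin k₁ → Fin n) (j₂ : Fin k₂ → Fin n) :
    S u P (concatRel π₁ π₂) (Fin.append j₁ j₂) = S u (S u P π₂ j₂) π₁ j₁ := by
  classical
  unfold S
  rw [← (Fin.appendEquiv k₁ k₂).sum_comp, Fintype.sum_prod_type]
  refine Finset.sum_congr rfl fun i₁ _ => ?_
  have key : ∀ i₂ : Fin k₂ → Fin n,
      (List.ofFn fun l => u (Fin.append i₁ i₂ l) (Fin.append j₁ j₂ l)).prod =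
        (List.ofFn fun l => u (i₁ l) (j₁ l)).prod *
          (List.ofFn fun l => u (i₂ l) (j₂ l)).prod := by
    intro i₂
    simp [List.ofFn_add]
  simp only [Fin.appendEquiv, Equiv.coe_fn_mk, concatRel_append_iff, key]
  by_cases h : ∀ a b, π₁ a b → i₁ a = i₁ b
  · simp only [eq_true h, true_and, if_true, Finset.mul_sum, mul_ite, mul_zero, mul_assoc]
  · simp [h]

open Classical in
/-- the concatenation lemma (Lemma 5.3) for the sums `S`. -/
theorem S_concat
    {R : Type*} [Ring R] (n k₁ k₂ : ℕ) (hn : 0 < n) (hk₁ : 0 < k₁) (hk₂ : 0 < k₂)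
    (u : Fin n → Fin n → R) (P : R)
    (π₁ : Fin k₁ → Fin k₁ → Prop) (π₂ : Fin k₂ → Fin k₂ → Prop)
    (j₁ : Fin k₁ → Fin n) (j₂ : Fin k₂ → Fin n)
    (h1 : S u P π₁ j₁ = if ∀ a b, π₁ a b → j₁ a = j₁ b then P else 0)
    (h2 : S u P π₂ j₂ = if ∀ a b, π₂ a b → j₂ a = j₂ b then P else 0) :
    S u P (concatRel π₁ π₂) (Fin.append j₁ j₂) =
      if ∀ a b, concatRel π₁ π₂ a b →
          Fin.append j₁ j₂ a = Fin.append j₁ j₂ b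
        then P else 0 := by
  rw [S_append, h2]
  simp only [concatRel_append_iff]
  by_cases hj₂ : ∀ a b, π₂ a b → j₂ a = j₂ b
  · rw [if_pos hj₂, h1]
    simp only [eq_true hj₂, and_true]
  · rw [if_neg hj₂, if_neg fun h => hj₂ h.2]
    simp [S]
end

section
/- Let A be a unital complex star algebra, n a positive natural number, P ∈ A with P* = P and P² = P, and u : Fin n → Fin n → A a family with all entries selfadjoint satisfying the P-orthogonality relations ∑_k (u i k)*(u j k)*P = (if i = j then P else 0) and ∑_k (u k i)*(u k j)*P = (if i = j then P else 0) for all i, j. In the algebraic tensor product A ⊗[ℂ] A, define w i j := ∑_k (u i k) ⊗ (u k j). Then every w i j is selfadjoint and the pair (w, P ⊗ P) is P⊗P-orthogonal: ∑_k (w i k)*(w j k)*(P ⊗ P) = (if i = j then P ⊗ P else 0) and ∑_k (w k i)*(w k j)*(P ⊗ P) = (if i = j then P ⊗ P else 0) for all i, j. -/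
open scoped BigOperators TensorProduct

/-!
Expanding a product of two entries of `w` against `P ⊗ P` gives terms
`(u i l * u j m * P) ⊗ (u l k * u m k * P)`. The outer index `k` occurs in one tensor leg only,
so the orthogonality relation there forces `l = m` and leaves `P`; the remaining sum over `l` is
the same relation in the other leg. Selfadjointness of `w` holds termwise.
-/

/-- if `(u, P)` is `P`-orthogonal over a unital complex star algebra `A`,
then in `A ⊗[ℂ] A` (equipped with any star ring structure satisfying
`star (a ⊗ b) = star a ⊗ star b`) the matrix `w i j = ∑ k, u i k ⊗ u k j` has selfadjoint
entries and `(w, P ⊗ P)` is `P ⊗ P`-orthogonal. -/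
theorem coproduct_preserves_P_orthogonal
    {A : Type*} [Ring A] [Algebra ℂ A] [StarRing A] [StarModule ℂ A]
    [StarRing (A ⊗[ℂ] A)]
    (hstar : ∀ a b : A, star (a ⊗ₜ[ℂ] b) = star a ⊗ₜ[ℂ] star b)
    (n : ℕ) (hn : 0 < n) (P : A) (hPsa : star P = P) (hPidem : P * P = P)
    (u : Fin n → Fin n → A)
    (hsa : ∀ i j, IsSelfAdjoint (u i j))
    (hrow : ∀ i j, ∑ k, u i k * u j k * P = if i = j then P else 0)
    (hcol : ∀ i j, ∑ k, u k i * u k j * P = if i = j then P else 0) :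
    (∀ i j, IsSelfAdjoint (∑ k, u i k ⊗ₜ[ℂ] u k j)) ∧
      (∀ i j, ∑ k, (∑ l, u i l ⊗ₜ[ℂ] u l k) * (∑ l, u j l ⊗ₜ[ℂ] u l k) * (P ⊗ₜ[ℂ] P)
          = if i = j then P ⊗ₜ[ℂ] P else 0) ∧
      (∀ i j, ∑ k, (∑ l, u k l ⊗ₜ[ℂ] u l i) * (∑ l, u k l ⊗ₜ[ℂ] u l j) * (P ⊗ₜ[ℂ] P)
          = if i = j then P ⊗ₜ[ℂ] P else 0) := by
  refine ⟨fun i j => ?_, fun i j => ?_, fun i j => ?_⟩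
  · rw [isSelfAdjoint_iff, star_sum]
    refine Finset.sum_congr rfl fun k _ => ?_
    rw [hstar, (hsa i k).star_eq, (hsa k j).star_eq]
  · -- Summing over `k` in the second leg first contracts `l = m` by the row relation;
    -- the row relation in the first leg then finishes.
    calc ∑ k, (∑ l, u i l ⊗ₜ[ℂ] u l k) * (∑ m, u j m ⊗ₜ[ℂ] u m k) * (P ⊗ₜ[ℂ] P)
        = ∑ k, ∑ l, ∑ m, (u i l * u j m * P) ⊗ₜ[ℂ] (u l k * u m k * P) := by
          simp only [Finset.sum_mul, Finset.mul_sum, Algebra.TensorProduct.tmul_mul_tmul]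
          exact Finset.sum_congr rfl fun k _ => Finset.sum_comm
      _ = ∑ l, ∑ m, (u i l * u j m * P) ⊗ₜ[ℂ] (∑ k, u l k * u m k * P) := by
          simp only [TensorProduct.tmul_sum]
          rw [Finset.sum_comm]
          exact Finset.sum_congr rfl fun l _ => Finset.sum_comm
      _ = ∑ l, (u i l * u j l * P) ⊗ₜ[ℂ] P := by
          simp [hrow, TensorProduct.tmul_ite]
      _ = if i = j then P ⊗ₜ[ℂ] P else 0 := by
          rw [← TensorProduct.sum_tmul, hrow, TensorProduct.ite_tmul]
  · -- The mirror image: here `k` sits in the first leg, which is contracted first.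
    calc ∑ k, (∑ l, u k l ⊗ₜ[ℂ] u l i) * (∑ m, u k m ⊗ₜ[ℂ] u m j) * (P ⊗ₜ[ℂ] P)
        = ∑ k, ∑ l, ∑ m, (u k l * u k m * P) ⊗ₜ[ℂ] (u l i * u m j * P) := by
          simp only [Finset.sum_mul, Finset.mul_sum, Algebra.TensorProduct.tmul_mul_tmul]
          exact Finset.sum_congr rfl fun k _ => Finset.sum_comm
      _ = ∑ l, ∑ m, (∑ k, u k l * u k m * P) ⊗ₜ[ℂ] (u l i * u m j * P) := by
          simp only [TensorProduct.sum_tmul]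
          rw [Finset.sum_comm]
          exact Finset.sum_congr rfl fun l _ => Finset.sum_comm
      _ = ∑ l, P ⊗ₜ[ℂ] (u l i * u l j * P) := by
          simp [hcol, TensorProduct.ite_tmul]
      _ = if i = j then P ⊗ₜ[ℂ] P else 0 := by
          rw [← TensorProduct.tmul_sum, hcol, TensorProduct.tmul_ite]
end

section
/- Let A be a unital complex star algebra, n a positive natural number, P ∈ A with P* = P and P² = P, and u : Fin n → Fin n → A a family with all entries selfadjoint satisfying the P-orthogonality relations (∑_k (u i k)*(u j k)*P = δ_{ij} P and ∑_k (u k i)*(u k j)*P = δ_{ij} P) and the P-cubic relations ((u i j)*(u i k)*P = 0 and (u j i)*(u k i)*P = 0 whenever j ≠ k). In A ⊗[ℂ] A define w i j := ∑_k (u i k) ⊗ (u k j). Then (w, P ⊗ P) satisfies the P⊗P-cubic relations: (w i j)*(w i k)*(P ⊗ P) = 0 and (w j i)*(w k i)*(P ⊗ P) = 0 whenever j ≠ k. -/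
open scoped BigOperators TensorProduct

/-- if `(u, P)` is `P`-orthogonal and `P`-cubic over a unital complex star
algebra `A`, then in `A ⊗[ℂ] A` the matrix `w i j = ∑ k, u i k ⊗ u k j` together with
`P ⊗ P` satisfies the `P ⊗ P`-cubic relations. -/
theorem coproduct_preserves_P_cubic
    {A : Type*} [Ring A] [Algebra ℂ A] [StarRing A] [StarModule ℂ A]
    (n : ℕ) (hn : 0 < n) (P : A) (hPsa : star P = P) (hPidem : P * P = P)
    (u : Fin n → Fin n → A)
    (hsa : ∀ i j, IsSelfAdjoint (u i j))
    (hrow : ∀ i j, ∑ k, u i k * u j k * P = if i = j then P else 0)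
    (hcol : ∀ i j, ∑ k, u k i * u k j * P = if i = j then P else 0)
    (hcubic : ∀ i j k, j ≠ k → u i j * u i k * P = 0 ∧ u j i * u k i * P = 0) :
    ∀ i j k, j ≠ k →
      (∑ l, u i l ⊗ₜ[ℂ] u l j) * (∑ l, u i l ⊗ₜ[ℂ] u l k) * (P ⊗ₜ[ℂ] P) = 0 ∧
      (∑ l, u j l ⊗ₜ[ℂ] u l i) * (∑ l, u k l ⊗ₜ[ℂ] u l i) * (P ⊗ₜ[ℂ] P) = 0 := by
  intro i j k hjk
  simp only [Finset.sum_mul, Finset.mul_sum, Algebra.TensorProduct.tmul_mul_tmul]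
  -- In every summand one tensor leg vanishes by `hcubic`: off the diagonal `l ≠ m` it is the leg
  -- whose entries share the outer index `i`, on the diagonal `l = m` it is the other leg.
  constructor
  · refine Finset.sum_eq_zero fun m _ => Finset.sum_eq_zero fun l _ => ?_
    by_cases hlm : l = m
    · subst hlm
      rw [(hcubic l j k hjk).1, TensorProduct.tmul_zero]
    · rw [(hcubic i l m hlm).1, TensorProduct.zero_tmul]
  · refine Finset.sum_eq_zero fun m _ => Finset.sum_eq_zero fun l _ => ?_
    by_cases hlm : l = m
    · subst hlm
      rw [(hcubic l j k hjk).2, TensorProduct.zero_tmul]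
    · rw [(hcubic i l m hlm).2, TensorProduct.tmul_zero]
end

section
/- Let R be a unital ring that is a commutative-scalar algebra (e.g. a complex algebra), n a positive natural number, P ∈ R with P² = P, and u : Fin n → Fin n → R a family satisfying the P-bistochastic sum conditions: ∑_j (u i j) * P = P and ∑_j (u j i) * P = P for every i. In the algebraic tensor product R ⊗ R define w i j := ∑_k (u i k) ⊗ (u k j). Then ∑_j (w i j) * (P ⊗ P) = P ⊗ P and ∑_j (w j i) * (P ⊗ P) = P ⊗ P for every i. -/
open scoped BigOperators TensorProduct

/-- if `(u, P)` satisfies the `P`-bistochastic sum conditions over a unital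
complex algebra `R`, then in `R ⊗[ℂ] R` the matrix `w i j = ∑ k, u i k ⊗ u k j` together
with `P ⊗ P` satisfies the `P ⊗ P`-bistochastic sum conditions. -/
theorem coproduct_preserves_P_bistochastic
    {R : Type*} [Ring R] [Algebra ℂ R]
    (n : ℕ) (hn : 0 < n) (P : R) (hPidem : P * P = P)
    (u : Fin n → Fin n → R)
    (hrowsum : ∀ i, ∑ j, u i j * P = P)
    (hcolsum : ∀ i, ∑ j, u j i * P = P) :
    (∀ i, ∑ j, (∑ k, u i k ⊗ₜ[ℂ] u k j) * (P ⊗ₜ[ℂ] P) = P ⊗ₜ[ℂ] P) ∧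
    (∀ i, ∑ j, (∑ k, u j k ⊗ₜ[ℂ] u k i) * (P ⊗ₜ[ℂ] P) = P ⊗ₜ[ℂ] P) := by
  simp only [Finset.sum_mul, Algebra.TensorProduct.tmul_mul_tmul]
  -- After exchanging the sums, the sum over the outer index `j` collapses one tensor leg
  -- to `P`, and the sum over `k` then collapses the other.
  constructor <;> intro i <;> rw [Finset.sum_comm]
  · simp only [← TensorProduct.tmul_sum, hrowsum, ← TensorProduct.sum_tmul]
  · simp only [← TensorProduct.sum_tmul, hcolsum, ← TensorProduct.tmul_sum]
end

section
/- Let R be a unital complex algebra, n a positive natural number, P ∈ R with P² = P, u : Fin n → Fin n → R, and suppose there is an element r ∈ R such that ∑_j (u i j) * P = r and ∑_j (u j i) * P = r for every i (the P-' condition: all row and column sums times P are equal). In the algebraic tensor product R ⊗[ℂ] R define w i j := ∑_k (u i k) ⊗ (u k j). Then for every i, ∑_j (w i j) * (P ⊗ P) = r ⊗ r and ∑_j (w j i) * (P ⊗ P) = r ⊗ r; in particular (w, P ⊗ P) again satisfies the P-' condition with common sum r ⊗ r. -/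
open scoped BigOperators TensorProduct

/-- if `(u, P)` satisfies the `P`-prime condition (all row and column sums
times `P` equal a common element `r`) over a unital complex algebra `R`, then in
`R ⊗[ℂ] R` the matrix `w i j = ∑ k, u i k ⊗ u k j` together with `P ⊗ P` satisfies the
`P ⊗ P`-prime condition with common sum `r ⊗ r`. -/
theorem coproduct_preserves_P_prime
    {R : Type*} [Ring R] [Algebra ℂ R]
    (n : ℕ) (hn : 0 < n) (P : R) (hPidem : P * P = P)
    (u : Fin n → Fin n → R) (r : R)
    (hrowsum : ∀ i, ∑ j, u i j * P = r)
    (hcolsum : ∀ i, ∑ j, u j i * P = r) :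
    (∀ i, ∑ j, (∑ k, u i k ⊗ₜ[ℂ] u k j) * (P ⊗ₜ[ℂ] P) = r ⊗ₜ[ℂ] r) ∧
    (∀ i, ∑ j, (∑ k, u j k ⊗ₜ[ℂ] u k i) * (P ⊗ₜ[ℂ] P) = r ⊗ₜ[ℂ] r) := by
  -- Swapping the sums lets the inner one collapse to `r` for each fixed middle index `k`:
  -- in the right tensor leg for row sums, in the left leg for column sums.
  constructor
  · intro i
    simp only [Finset.sum_mul, Algebra.TensorProduct.tmul_mul_tmul]
    rw [Finset.sum_comm]
    simp only [← TensorProduct.tmul_sum, hrowsum, ← TensorProduct.sum_tmul]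
  · intro i
    simp only [Finset.sum_mul, Algebra.TensorProduct.tmul_mul_tmul]
    rw [Finset.sum_comm]
    simp only [← TensorProduct.sum_tmul, hcolsum, ← TensorProduct.tmul_sum]
end
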